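/- arXiv:0810.3195 — 6 statements merged into one kernel-verified Lean document; each statement's English description precedes it below -/
import Mathlib

section
/- Let V be a real inner product space of finite dimension n ≥ 2, let p ∈ V be a nonzero vector, and set t = ‖p‖²/2. Let a₁, a₂, a₃, a₄, b₁, b₂, b₃, b₄ be real numbers and let J : V × V → V × V be the linear map J(X, θ) = (a₄X + b₄⟨p,X⟩p − a₂θ − b₂⟨p,θ⟩p, a₁X + b₁⟨p,X⟩p + a₃θ + b₃⟨p,θ⟩p). Then J ∘ J = −id (i.e. J is an almost complex structure on V × V) if and only if a₄ = −a₃, b₄ = −b₃, a₁a₂ = 1 + a₃², and (a₁ + 2tb₁)(a₂ + 2tb₂) = 1 + (a₃ + 2tb₃)². -/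
open scoped RealInnerProductSpace

theorem aux_mat (a b c d : ℝ) (h1 : a * a + b * c = -1) (h2 : b * (a + d) = 0)
    (h3 : c * (a + d) = 0) (h4 : c * b + d * d = -1) : a = -d := by
  by_contra h
  have hs : a + d ≠ 0 := fun h' => h (by linarith)
  have hb : b = 0 := by simpa [hs] using h2
  subst hb
  nlinarith [mul_self_nonneg a]

/-- Fibrewise form of Theorem 2.1: the general natural tensor `J` on the fibre
`V × V` (horizontal ⊕ vertical) squares to `-id` iff `a₄ = -a₃`, `b₄ = -b₃`,
`a₁a₂ = 1 + a₃²` and `(a₁ + 2tb₁)(a₂ + 2tb₂) = 1 + (a₃ + 2tb₃)²`. -/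
theorem almost_complex_iff_coeff_relations
    {V : Type*} [NormedAddCommGroup V] [InnerProductSpace ℝ V]
    [FiniteDimensional ℝ V] (hn : 2 ≤ Module.finrank ℝ V)
    (p : V) (hp : p ≠ 0)
    (a₁ a₂ a₃ a₄ b₁ b₂ b₃ b₄ t : ℝ) (ht : t = ‖p‖ ^ 2 / 2)
    (J : V × V → V × V)
    (hJ : ∀ X θ : V, J (X, θ) =
      (a₄ • X + (b₄ * ⟪p, X⟫) • p - a₂ • θ - (b₂ * ⟪p, θ⟫) • p,
       a₁ • X + (b₁ * ⟪p, X⟫) • p + a₃ • θ + (b₃ * ⟪p, θ⟫) • p)) :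
    (∀ ξ : V × V, J (J ξ) = -ξ) ↔
      (a₄ = -a₃ ∧ b₄ = -b₃ ∧ a₁ * a₂ = 1 + a₃ ^ 2 ∧
        (a₁ + 2 * t * b₁) * (a₂ + 2 * t * b₂) = 1 + (a₃ + 2 * t * b₃) ^ 2) := by
  have hpp : ⟪p, p⟫ = 2 * t := by rw [real_inner_self_eq_norm_sq, ht]; ring
  have ht0 : 2 * t ≠ 0 := by rw [← hpp]; exact inner_self_ne_zero.mpr hp
  constructor
  · intro H
    obtain ⟨u, hu, hpu⟩ : ∃ u : V, u ≠ 0 ∧ ⟪p, u⟫ = 0 := by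
      have h1 := Submodule.finrank_add_finrank_orthogonal (Submodule.span ℝ {p})
      rw [finrank_span_singleton hp] at h1
      have h2 : (Submodule.span ℝ {p})ᗮ ≠ ⊥ := by
        intro h
        rw [h, finrank_bot] at h1
        omega
      obtain ⟨u, hu, hu0⟩ := Submodule.exists_mem_ne_zero_of_ne_bot h2
      exact ⟨u, hu0, Submodule.mem_orthogonal_singleton_iff_inner_right.mp hu⟩
    have cancel : ∀ (v : V), v ≠ 0 → ∀ x : ℝ, x • v = 0 → x = 0 := by
      intro v hv x h
      exact (smul_eq_zero.mp h).resolve_right hv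
    have key : ∀ (v : V), v ≠ 0 → ∀ c1 c2 c3 c4 : ℝ,
        (∀ x y : ℝ, J (x • v, y • v) = ((c4 * x - c2 * y) • v, (c1 * x + c3 * y) • v)) →
        c4 = -c3 ∧ c1 * c2 = 1 + c3 ^ 2 := by
      intro v hv c1 c2 c3 c4 hc
      have e1 := H ((1 : ℝ) • v, (0 : ℝ) • v)
      have e2 := H ((0 : ℝ) • v, (1 : ℝ) • v)
      rw [hc, hc, Prod.neg_mk, Prod.mk.injEq] at e1 e2
      obtain ⟨e1, e1'⟩ := e1
      obtain ⟨e2, e2'⟩ := e2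
      have f1 := cancel v hv (c4 * c4 - c2 * c1 + 1) (by linear_combination (norm := module) e1)
      have f2 := cancel v hv (c1 * (c4 + c3)) (by linear_combination (norm := module) e1')
      have f3 := cancel v hv (-c2 * (c4 + c3)) (by linear_combination (norm := module) e2)
      have f4 := cancel v hv (-c1 * c2 + c3 * c3 + 1) (by linear_combination (norm := module) e2')
      exact ⟨aux_mat c4 (-c2) c1 c3 (by linarith) f3 f2 (by linarith), by linarith⟩
    obtain ⟨k1, k2⟩ := key u hu a₁ a₂ a₃ a₄ (by
      intro x y
      rw [hJ]
      simp only [inner_smul_right, hpu, Prod.mk.injEq]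
      constructor <;> module)
    obtain ⟨k3, k4⟩ := key p hp (a₁ + 2 * t * b₁) (a₂ + 2 * t * b₂) (a₃ + 2 * t * b₃)
      (a₄ + 2 * t * b₄) (by
      intro x y
      rw [hJ]
      simp only [inner_smul_right, hpp, Prod.mk.injEq]
      constructor <;> module)
    refine ⟨k1, ?_, k2, k4⟩
    apply mul_left_cancel₀ ht0
    linarith
  · rintro ⟨rfl, rfl, h3, h4⟩ ⟨X, θ⟩
    have E : a₁ * b₂ + b₁ * a₂ + 2 * t * b₁ * b₂ - 2 * a₃ * b₃ - 2 * t * b₃ ^ 2 = 0 := by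
      apply mul_left_cancel₀ ht0
      linear_combination h4 - h3
    rw [hJ, hJ, Prod.neg_mk, Prod.mk.injEq]
    simp only [inner_add_right, inner_sub_right, inner_smul_right, hpp]
    generalize ⟪p, X⟫ = s
    generalize ⟪p, θ⟫ = r
    have h3X := congrArg (· • X) h3
    have h3T := congrArg (· • θ) h3
    have Es := congrArg (fun z => (z * s) • p) E
    have Er := congrArg (fun z => (z * r) • p) E
    beta_reduce at h3X h3T Es Er
    constructor
    · linear_combination (norm := module) -h3X - Es
    · linear_combination (norm := module) -h3T - Er
end

section
/- Let V be a finite-dimensional real inner product space, let p ∈ V be any vector (possibly zero), and set t = ‖p‖²/2. Let a₁, a₂, a₃, b₁, b₂, b₃ be real numbers satisfying a₁a₂ = 1 + a₃² and (a₁ + 2tb₁)(a₂ + 2tb₂) = 1 + (a₃ + 2tb₃)². Define J : V × V → V × V by J(X, θ) = (−a₃X − b₃⟨p,X⟩p − a₂θ − b₂⟨p,θ⟩p, a₁X + b₁⟨p,X⟩p + a₃θ + b₃⟨p,θ⟩p). Then J ∘ J = −id. -/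
open scoped RealInnerProductSpace

/-- Fibrewise sufficiency part of Theorem 2.1 (with `a₄ = -a₃`, `b₄ = -b₃`
substituted): under the coefficient relations, `J ∘ J = -id`. -/
theorem almost_complex_of_coeff_relations
    {V : Type*} [NormedAddCommGroup V] [InnerProductSpace ℝ V]
    [FiniteDimensional ℝ V]
    (p : V) (a₁ a₂ a₃ b₁ b₂ b₃ t : ℝ) (ht : t = ‖p‖ ^ 2 / 2)
    (h1 : a₁ * a₂ = 1 + a₃ ^ 2)
    (h2 : (a₁ + 2 * t * b₁) * (a₂ + 2 * t * b₂) = 1 + (a₃ + 2 * t * b₃) ^ 2)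
    (J : V × V → V × V)
    (hJ : ∀ X θ : V, J (X, θ) =
      (-(a₃ • X) - (b₃ * ⟪p, X⟫) • p - a₂ • θ - (b₂ * ⟪p, θ⟫) • p,
       a₁ • X + (b₁ * ⟪p, X⟫) • p + a₃ • θ + (b₃ * ⟪p, θ⟫) • p)) :
    ∀ ξ : V × V, J (J ξ) = -ξ := by
  have hpp : ⟪p, p⟫ = 2 * t := by
    rw [real_inner_self_eq_norm_sq, ht]; ring
  have hK : (2 * a₃ * b₃ + 2 * t * b₃ ^ 2 - a₂ * b₁ - a₁ * b₂ - 2 * t * b₁ * b₂) • p = 0 := by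
    by_cases hp : p = 0
    · simp [hp]
    · have hn : ‖p‖ ≠ 0 := norm_ne_zero_iff.mpr hp
      have ht0 : t ≠ 0 := by rw [ht]; positivity
      have : 2 * a₃ * b₃ + 2 * t * b₃ ^ 2 - a₂ * b₁ - a₁ * b₂ - 2 * t * b₁ * b₂ = 0 := by
        apply mul_left_cancel₀ ht0
        linear_combination (h1 - h2) / 2
      rw [this, zero_smul]
  have h1X : ∀ X : V, (a₁ * a₂ - 1 - a₃ ^ 2) • X = 0 := by
    intro X
    rw [show a₁ * a₂ - 1 - a₃ ^ 2 = 0 by linarith, zero_smul]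
  rintro ⟨X, θ⟩
  rw [hJ, hJ]
  simp only [inner_add_right, inner_sub_right, inner_neg_right, real_inner_smul_right, hpp,
    Prod.neg_mk]
  refine Prod.ext ?_ ?_
  · linear_combination (norm := module) ⟪p, X⟫ • hK - h1X X
  · linear_combination (norm := module) ⟪p, θ⟫ • hK - h1X θ
end

section
/- Let V be a real inner product space of finite dimension n ≥ 2, let p ∈ V be a nonzero vector, and set t = ‖p‖²/2. Let a₁, a₂, a₃, b₁, b₂, b₃ be real numbers satisfying a₁a₂ = 1 + a₃² and (a₁ + 2tb₁)(a₂ + 2tb₂) = 1 + (a₃ + 2tb₃)², and let J : V × V → V × V be given by J(X, θ) = (−a₃X − b₃⟨p,X⟩p − a₂θ − b₂⟨p,θ⟩p, a₁X + b₁⟨p,X⟩p + a₃θ + b₃⟨p,θ⟩p). Let c₁, c₂, c₃, d₁, d₂, d₃ be real numbers and let G be the symmetric bilinear form on V × V given by G((X,θ),(Y,ω)) = c₁⟨X,Y⟩ + d₁⟨p,X⟩⟨p,Y⟩ + c₂⟨θ,ω⟩ + d₂⟨p,θ⟩⟨p,ω⟩ + c₃(⟨X,ω⟩ + ⟨θ,Y⟩)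 + d₃(⟨p,X⟩⟨p,ω⟩ + ⟨p,θ⟩⟨p,Y⟩). Then G(Jξ, Jη) = G(ξ, η) for all ξ, η ∈ V × V if and only if there exist real numbers λ and μ such that c₁ = λa₁, c₂ = λa₂, c₃ = λa₃, c₁ + 2td₁ = (λ + 2tμ)(a₁ + 2tb₁), c₂ + 2td₂ = (λ + 2tμ)(a₂ + 2tb₂), and c₃ + 2td₃ = (λ + 2tμ)(a₃ + 2tb₃). -/
open scoped RealInnerProductSpace

lemma aux_prop (A₁ A₂ A₃ C₁ C₂ C₃ : ℝ) (h : A₁ * A₂ = 1 + A₃ ^ 2)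
    (e1 : C₁ * A₃ ^ 2 - 2 * C₃ * A₃ * A₁ + C₂ * A₁ ^ 2 - C₁ = 0)
    (e3 : C₁ * A₃ * A₂ - C₃ * A₃ ^ 2 - C₃ * A₁ * A₂ + C₂ * A₁ * A₃ - C₃ = 0) :
    ∃ l, C₁ = l * A₁ ∧ C₂ = l * A₂ ∧ C₃ = l * A₃ := by
  have hA : A₁ ≠ 0 := by
    rintro rfl
    nlinarith [sq_nonneg A₃]
  have hv : A₁ * (C₂ * A₁ - C₁ * A₂) = 2 * A₃ * (C₃ * A₁ - C₁ * A₃) := by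
    linear_combination e1 - C₁ * h
  have hu : C₃ * A₁ - C₁ * A₃ = 0 := by
    have : 2 * (C₃ * A₁ - C₁ * A₃) = 0 := by
      linear_combination A₃ * hv - A₁ * e3 +
        (-2 * (C₃ * A₁ - C₁ * A₃) + C₃ * A₁) * h
    linarith
  have hv' : C₂ * A₁ - C₁ * A₂ = 0 := by
    rw [hu, mul_zero] at hv
    exact (mul_eq_zero.mp hv).resolve_left hA
  refine ⟨C₁ / A₁, ?_, ?_, ?_⟩
  · field_simp
  · field_simp
    linarith
  · field_simp
    linarith

lemma aux_conv (A₁ A₂ A₃ l : ℝ) (h : A₁ * A₂ = 1 + A₃ ^ 2) :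
    (l * A₁) * A₃ ^ 2 - 2 * (l * A₃) * A₃ * A₁ + (l * A₂) * A₁ ^ 2 - l * A₁ = 0 ∧
    (l * A₁) * A₂ ^ 2 - 2 * (l * A₃) * A₃ * A₂ + (l * A₂) * A₃ ^ 2 - l * A₂ = 0 ∧
    (l * A₁) * A₃ * A₂ - (l * A₃) * A₃ ^ 2 - (l * A₃) * A₁ * A₂ + (l * A₂) * A₁ * A₃
      - l * A₃ = 0 := by
  refine ⟨?_, ?_, ?_⟩
  · linear_combination l * A₁ * h
  · linear_combination l * A₂ * h
  · linear_combination l * A₃ * h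

/-- Fibrewise form of Theorem 2.3: `(G, J)` is almost Hermitian at the point
iff the coefficients of `G` are proportional to those of `J` via `λ` and
`λ + 2tμ`. -/
theorem almost_hermitian_iff_proportionality
    {V : Type*} [NormedAddCommGroup V] [InnerProductSpace ℝ V]
    [FiniteDimensional ℝ V] (hn : 2 ≤ Module.finrank ℝ V)
    (p : V) (hp : p ≠ 0)
    (a₁ a₂ a₃ b₁ b₂ b₃ t : ℝ) (ht : t = ‖p‖ ^ 2 / 2)
    (h1 : a₁ * a₂ = 1 + a₃ ^ 2)
    (h2 : (a₁ + 2 * t * b₁) * (a₂ + 2 * t * b₂) = 1 + (a₃ + 2 * t * b₃) ^ 2)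
    (J : V × V → V × V)
    (hJ : ∀ X θ : V, J (X, θ) =
      (-(a₃ • X) - (b₃ * ⟪p, X⟫) • p - a₂ • θ - (b₂ * ⟪p, θ⟫) • p,
       a₁ • X + (b₁ * ⟪p, X⟫) • p + a₃ • θ + (b₃ * ⟪p, θ⟫) • p))
    (c₁ c₂ c₃ d₁ d₂ d₃ : ℝ)
    (G : V × V → V × V → ℝ)
    (hG : ∀ X θ Y ω : V, G (X, θ) (Y, ω) =
      c₁ * ⟪X, Y⟫ + d₁ * (⟪p, X⟫ * ⟪p, Y⟫) + c₂ * ⟪θ, ω⟫ +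
        d₂ * (⟪p, θ⟫ * ⟪p, ω⟫) + c₃ * (⟪X, ω⟫ + ⟪θ, Y⟫) +
        d₃ * (⟪p, X⟫ * ⟪p, ω⟫ + ⟪p, θ⟫ * ⟪p, Y⟫)) :
    (∀ ξ η : V × V, G (J ξ) (J η) = G ξ η) ↔
      ∃ lam mu : ℝ,
        c₁ = lam * a₁ ∧ c₂ = lam * a₂ ∧ c₃ = lam * a₃ ∧
        c₁ + 2 * t * d₁ = (lam + 2 * t * mu) * (a₁ + 2 * t * b₁) ∧
        c₂ + 2 * t * d₂ = (lam + 2 * t * mu) * (a₂ + 2 * t * b₂) ∧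
        c₃ + 2 * t * d₃ = (lam + 2 * t * mu) * (a₃ + 2 * t * b₃) := by
  have hpp : ⟪p, p⟫ = 2 * t := by rw [real_inner_self_eq_norm_sq, ht]; ring
  have htpos : 0 < 2 * t := by
    rw [← hpp]; exact real_inner_self_pos.mpr hp
  generalize 2 * t = s at *
  have key : ∀ X θ Y ω : V, G (J (X, θ)) (J (Y, ω)) - G (X, θ) (Y, ω) =
      (c₁ * a₃ ^ 2 - 2 * c₃ * a₃ * a₁ + c₂ * a₁ ^ 2 - c₁) * ⟪X, Y⟫ +
      (c₁ * a₂ ^ 2 - 2 * c₃ * a₃ * a₂ + c₂ * a₃ ^ 2 - c₂) * ⟪θ, ω⟫ +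
      (c₁ * a₃ * a₂ - c₃ * a₃ ^ 2 - c₃ * a₁ * a₂ + c₂ * a₁ * a₃ - c₃) * (⟪X, ω⟫ + ⟪θ, Y⟫) +
      (c₁ * (2 * a₃ * b₃ + s * b₃ ^ 2) + d₁ * (a₃ + s * b₃) ^ 2
        - 2 * (c₃ * (a₃ * b₁ + a₁ * b₃ + s * b₁ * b₃) + d₃ * (a₃ + s * b₃) * (a₁ + s * b₁))
        + c₂ * (2 * a₁ * b₁ + s * b₁ ^ 2) + d₂ * (a₁ + s * b₁) ^ 2 - d₁) * (⟪p, X⟫ * ⟪p, Y⟫) +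
      (c₁ * (2 * a₂ * b₂ + s * b₂ ^ 2) + d₁ * (a₂ + s * b₂) ^ 2
        - 2 * (c₃ * (a₃ * b₂ + a₂ * b₃ + s * b₂ * b₃) + d₃ * (a₃ + s * b₃) * (a₂ + s * b₂))
        + c₂ * (2 * a₃ * b₃ + s * b₃ ^ 2) + d₂ * (a₃ + s * b₃) ^ 2 - d₂) * (⟪p, θ⟫ * ⟪p, ω⟫) +
      (c₁ * (a₃ * b₂ + a₂ * b₃ + s * b₂ * b₃) + d₁ * (a₃ + s * b₃) * (a₂ + s * b₂)
        - (c₃ * (2 * a₃ * b₃ + s * b₃ ^ 2) + d₃ * (a₃ + s * b₃) ^ 2)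
        - (c₃ * (a₁ * b₂ + a₂ * b₁ + s * b₁ * b₂) + d₃ * (a₁ + s * b₁) * (a₂ + s * b₂))
        + c₂ * (a₁ * b₃ + a₃ * b₁ + s * b₁ * b₃) + d₂ * (a₁ + s * b₁) * (a₃ + s * b₃) - d₃) *
        (⟪p, X⟫ * ⟪p, ω⟫ + ⟪p, θ⟫ * ⟪p, Y⟫) := by
    intro X θ Y ω
    rw [hJ, hJ, hG, hG]
    simp only [inner_add_left, inner_add_right, inner_sub_left, inner_sub_right,
      inner_neg_left, inner_neg_right, real_inner_smul_left, real_inner_smul_right, hpp,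
      real_inner_comm p X, real_inner_comm p θ]
    rw [real_inner_comm X p, real_inner_comm θ p]
    ring
  constructor
  · intro H
    obtain ⟨q, hq0, hpq⟩ : ∃ q : V, q ≠ 0 ∧ ⟪p, q⟫ = 0 := by
      have hlt : (ℝ ∙ p) ≠ ⊤ := by
        intro h
        have h' := finrank_span_singleton (K := ℝ) hp
        rw [h, finrank_top] at h'
        omega
      have hb : (ℝ ∙ p)ᗮ ≠ ⊥ := fun h => hlt ((Submodule.orthogonal_eq_bot_iff).mp h)
      obtain ⟨q, hq, hq0⟩ := Submodule.exists_mem_ne_zero_of_ne_bot hb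
      exact ⟨q, hq0, (Submodule.mem_orthogonal_singleton_iff_inner_right).mp hq⟩
    have hqq : ⟪q, q⟫ ≠ 0 := (real_inner_self_pos.mpr hq0).ne'
    have K : ∀ X θ Y ω : V, _ := fun X θ Y ω =>
      (key X θ Y ω).symm.trans (sub_eq_zero.mpr (H (X, θ) (Y, ω)))
    have q1 := K q 0 q 0
    have q3 := K q 0 0 q
    have p1 := K p 0 p 0
    have p3 := K p 0 0 p
    simp only [hpq, hpp, inner_zero_left, inner_zero_right, mul_zero, add_zero, zero_add]
      at q1 q3 p1 p3
    have q1' := (mul_eq_zero.mp q1).resolve_right hqq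
    have q3' := (mul_eq_zero.mp q3).resolve_right hqq
    obtain ⟨l, hl1, hl2, hl3⟩ := aux_prop a₁ a₂ a₃ c₁ c₂ c₃ h1 q1' q3'
    obtain ⟨m, hm1, hm2, hm3⟩ := aux_prop (a₁ + s * b₁) (a₂ + s * b₂) (a₃ + s * b₃)
      (c₁ + s * d₁) (c₂ + s * d₂) (c₃ + s * d₃) h2
      (mul_left_cancel₀ htpos.ne' (by linear_combination p1))
      (mul_left_cancel₀ htpos.ne' (by linear_combination p3))
    have hlm : l + s * ((m - l) / s) = m := by
      field_simp
      ring
    exact ⟨l, (m - l) / s, hl1, hl2, hl3, by rw [hlm, hm1], by rw [hlm, hm2], by rw [hlm, hm3]⟩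
  · rintro ⟨l, mu, hl1, hl2, hl3, hm1, hm2, hm3⟩ ⟨X, θ⟩ ⟨Y, ω⟩
    obtain ⟨e1, e2, e3⟩ := aux_conv a₁ a₂ a₃ l h1
    obtain ⟨f1, f2, f3⟩ := aux_conv _ _ _ (l + s * mu) h2
    rw [← hl1, ← hl2, ← hl3] at e1 e2 e3
    rw [← hm1, ← hm2, ← hm3] at f1 f2 f3
    have hs := htpos.ne'
    have k := key X θ Y ω
    rw [e1, e2, e3] at k
    rw [← sub_eq_zero]
    apply mul_left_cancel₀ hs
    rw [k]
    linear_combination (f1 - e1) * (⟪p, X⟫ * ⟪p, Y⟫) + (f2 - e2) * (⟪p, θ⟫ * ⟪p, ω⟫) +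
      (f3 - e3) * (⟪p, X⟫ * ⟪p, ω⟫ + ⟪p, θ⟫ * ⟪p, Y⟫)
end

section
/- Let V be a finite-dimensional real inner product space, let p ∈ V, and set t = ‖p‖²/2. Let c₁, c₂, c₃, d₁, d₂, d₃ be real numbers satisfying c₁ > 0, c₁c₂ − c₃² > 0, c₁ + 2td₁ > 0, and (c₁ + 2td₁)(c₂ + 2td₂) − (c₃ + 2td₃)² > 0. Then the symmetric bilinear form G on V × V defined by G((X,θ),(Y,ω)) = c₁⟨X,Y⟩ + d₁⟨p,X⟩⟨p,Y⟩ + c₂⟨θ,ω⟩ + d₂⟨p,θ⟩⟨p,ω⟩ + c₃(⟨X,ω⟩ + ⟨θ,Y⟩) + d₃(⟨p,X⟩⟨p,ω⟩ + ⟨p,θ⟩⟨p,Y⟩) is positive definite. -/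
open scoped RealInnerProductSpace

theorem quad_aux {V : Type*} [NormedAddCommGroup V] [InnerProductSpace ℝ V]
    (a b c : ℝ) (ha : 0 < a) (hd : 0 < a * b - c ^ 2) (X Y : V) :
    0 ≤ a * ⟪X, X⟫ + b * ⟪Y, Y⟫ + 2 * c * ⟪X, Y⟫ ∧
    (a * ⟪X, X⟫ + b * ⟪Y, Y⟫ + 2 * c * ⟪X, Y⟫ = 0 → X = 0 ∧ Y = 0) := by
  have key : a * (a * ⟪X, X⟫ + b * ⟪Y, Y⟫ + 2 * c * ⟪X, Y⟫)
      = ⟪a • X + c • Y, a • X + c • Y⟫ + (a * b - c ^ 2) * ⟪Y, Y⟫ := by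
    simp only [inner_add_left, inner_add_right, real_inner_smul_left, real_inner_smul_right,
      real_inner_comm X Y]
    ring
  have h1 : 0 ≤ ⟪a • X + c • Y, a • X + c • Y⟫ := real_inner_self_nonneg
  have h2 : 0 ≤ (a * b - c ^ 2) * ⟪Y, Y⟫ := mul_nonneg hd.le real_inner_self_nonneg
  refine ⟨?_, fun h => ?_⟩
  · exact nonneg_of_mul_nonneg_right (by rw [key]; exact add_nonneg h1 h2) ha
  · rw [h, mul_zero] at key
    have h3 : (a * b - c ^ 2) * ⟪Y, Y⟫ = 0 := by linarith
    have hY : Y = 0 := by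
      rcases mul_eq_zero.1 h3 with h | h
      · exact absurd h hd.ne'
      · exact inner_self_eq_zero.1 h
    subst hY
    simp only [inner_zero_left, inner_zero_right, mul_zero, add_zero] at h
    rcases mul_eq_zero.1 h with h | h
    · exact absurd h ha.ne'
    · exact ⟨inner_self_eq_zero.1 h, rfl⟩

theorem decomp_aux {V : Type*} [NormedAddCommGroup V] [InnerProductSpace ℝ V]
    (p X : V) : ∃ (a : ℝ) (Z : V), X = a • p + Z ∧ ⟪p, Z⟫ = 0 := by
  refine ⟨⟪p, X⟫ / ⟪p, p⟫, X - (⟪p, X⟫ / ⟪p, p⟫) • p, by abel, ?_⟩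
  by_cases hp : p = 0
  · simp [hp]
  · have : ⟪p, p⟫ ≠ 0 := fun h => hp (inner_self_eq_zero.1 h)
    rw [inner_sub_right, real_inner_smul_right, div_mul_cancel₀ _ this, sub_self]

/-- Fibrewise positivity criterion for the general natural lifted metric `G`. -/
theorem metric_pos_def_of_coeff_pos
    {V : Type*} [NormedAddCommGroup V] [InnerProductSpace ℝ V]
    [FiniteDimensional ℝ V]
    (p : V) (t : ℝ) (ht : t = ‖p‖ ^ 2 / 2)
    (c₁ c₂ c₃ d₁ d₂ d₃ : ℝ)
    (hc₁ : 0 < c₁) (hdet : 0 < c₁ * c₂ - c₃ ^ 2)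
    (hc₁t : 0 < c₁ + 2 * t * d₁)
    (hdett : 0 < (c₁ + 2 * t * d₁) * (c₂ + 2 * t * d₂) - (c₃ + 2 * t * d₃) ^ 2)
    (G : V × V → V × V → ℝ)
    (hG : ∀ X θ Y ω : V, G (X, θ) (Y, ω) =
      c₁ * ⟪X, Y⟫ + d₁ * (⟪p, X⟫ * ⟪p, Y⟫) + c₂ * ⟪θ, ω⟫ +
        d₂ * (⟪p, θ⟫ * ⟪p, ω⟫) + c₃ * (⟪X, ω⟫ + ⟪θ, Y⟫) +
        d₃ * (⟪p, X⟫ * ⟪p, ω⟫ + ⟪p, θ⟫ * ⟪p, Y⟫)) :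
    ∀ ξ : V × V, ξ ≠ 0 → 0 < G ξ ξ := by
  rintro ⟨X, θ⟩ hne
  obtain ⟨a, Z, rfl, hZ⟩ := decomp_aux p X
  obtain ⟨b, W, rfl, hW⟩ := decomp_aux p θ
  obtain ⟨n1, z1⟩ := quad_aux c₁ c₂ c₃ hc₁ hdet Z W
  obtain ⟨n2, z2⟩ := quad_aux _ _ _ hc₁t hdett (a • p) (b • p)
  have hp : t = ⟪p, p⟫ / 2 := by rw [ht, real_inner_self_eq_norm_sq]
  have hZ' : ⟪Z, p⟫ = 0 := by rw [real_inner_comm]; exact hZ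
  have hW' : ⟪W, p⟫ = 0 := by rw [real_inner_comm]; exact hW
  have key : G (a • p + Z, b • p + W) (a • p + Z, b • p + W) =
      (c₁ * ⟪Z, Z⟫ + c₂ * ⟪W, W⟫ + 2 * c₃ * ⟪Z, W⟫) +
      ((c₁ + 2 * t * d₁) * ⟪a • p, a • p⟫ + (c₂ + 2 * t * d₂) * ⟪b • p, b • p⟫
        + 2 * (c₃ + 2 * t * d₃) * ⟪a • p, b • p⟫) := by
    rw [hG, hp]
    simp only [inner_add_left, inner_add_right, real_inner_smul_left, real_inner_smul_right,
      hZ, hW, hZ', hW', real_inner_comm Z W]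
    ring
  rw [key]
  refine lt_of_le_of_ne (add_nonneg n1 n2) fun h => hne ?_
  obtain ⟨rfl, rfl⟩ := z1 (by linarith)
  obtain ⟨h3, h4⟩ := z2 (by linarith)
  simp [h3, h4]
end

section
/- Let V be a finite-dimensional real inner product space, let p ∈ V, and set t = ‖p‖²/2. Let a₁, a₂, a₃, b₁, b₂, b₃, λ, μ be real numbers with a₁ > 0, a₁ + 2tb₁ > 0, λ > 0, λ + 2tμ > 0, a₁a₂ = 1 + a₃², and (a₁ + 2tb₁)(a₂ + 2tb₂) = 1 + (a₃ + 2tb₃)². Define c₁ = λa₁, c₂ = λa₂, c₃ = λa₃, and d₁, d₂, d₃ by c_i + 2td_i = (λ + 2tμ)(a_i + 2tb_i) for i = 1, 2, 3 (for t = 0 take d_i arbitrary subject to these equations, which are then vacuous). Then the symmetric bilinear form G on V × V defined by G((X,θ),(Y,ω)) = c₁⟨X,Y⟩ + d₁⟨p,X⟩⟨p,Y⟩ + c₂⟨θ,ω⟩ + d₂⟨p,θ⟩⟨p,ω⟩ + c₃(⟨X,ω⟩ + ⟨θ,Y⟩) + d₃(⟨p,X⟩⟨p,ω⟩ + ⟨p,θ⟩⟨p,Y⟩)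 is positive definite. -/
open scoped RealInnerProductSpace

theorem aux_pos {V : Type*} [NormedAddCommGroup V] [InnerProductSpace ℝ V]
    (c₁ c₂ c₃ : ℝ) (h₁ : 0 < c₁) (h : c₃ ^ 2 < c₁ * c₂) (X θ : V) (hne : X ≠ 0 ∨ θ ≠ 0) :
    0 < c₁ * ⟪X, X⟫ + c₂ * ⟪θ, θ⟫ + 2 * c₃ * ⟪X, θ⟫ := by
  have e : c₁ * (c₁ * ⟪X, X⟫ + c₂ * ⟪θ, θ⟫ + 2 * c₃ * ⟪X, θ⟫) =
      ⟪c₁ • X + c₃ • θ, c₁ • X + c₃ • θ⟫ + (c₁ * c₂ - c₃ ^ 2) * ⟪θ, θ⟫ := by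
    simp only [inner_add_left, inner_add_right, real_inner_smul_left, real_inner_smul_right,
      real_inner_comm X θ]
    ring
  by_cases hθ : θ = 0
  · subst hθ
    have hX : X ≠ 0 := by simpa using hne
    have := real_inner_self_pos.2 hX
    simp only [inner_zero_right, mul_zero, add_zero]
    positivity
  · have h3 := real_inner_self_pos.2 hθ
    have h4 : 0 ≤ ⟪c₁ • X + c₃ • θ, c₁ • X + c₃ • θ⟫ := real_inner_self_nonneg
    have h5 : 0 < (c₁ * c₂ - c₃ ^ 2) * ⟪θ, θ⟫ := mul_pos (by linarith) h3
    exact pos_of_mul_pos_right (a := c₁) (by rw [e]; linarith) h₁.le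

theorem aux_nonneg {V : Type*} [NormedAddCommGroup V] [InnerProductSpace ℝ V]
    (c₁ c₂ c₃ : ℝ) (h₁ : 0 < c₁) (h : c₃ ^ 2 < c₁ * c₂) (X θ : V) :
    0 ≤ c₁ * ⟪X, X⟫ + c₂ * ⟪θ, θ⟫ + 2 * c₃ * ⟪X, θ⟫ := by
  by_cases hne : X ≠ 0 ∨ θ ≠ 0
  · exact (aux_pos c₁ c₂ c₃ h₁ h X θ hne).le
  · push Not at hne
    simp [hne.1, hne.2]

/-- Fibrewise statement that the almost Hermitian pair of Theorem 2.3 yields a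
Riemannian metric when `λ > 0` and `λ + 2tμ > 0`. -/
theorem metric_pos_def_of_proportionality
    {V : Type*} [NormedAddCommGroup V] [InnerProductSpace ℝ V]
    [FiniteDimensional ℝ V]
    (p : V) (t : ℝ) (ht : t = ‖p‖ ^ 2 / 2)
    (a₁ a₂ a₃ b₁ b₂ b₃ lam mu : ℝ)
    (ha₁ : 0 < a₁) (ha₁t : 0 < a₁ + 2 * t * b₁)
    (hlam : 0 < lam) (hlamt : 0 < lam + 2 * t * mu)
    (h1 : a₁ * a₂ = 1 + a₃ ^ 2)
    (h2 : (a₁ + 2 * t * b₁) * (a₂ + 2 * t * b₂) = 1 + (a₃ + 2 * t * b₃) ^ 2)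
    (c₁ c₂ c₃ d₁ d₂ d₃ : ℝ)
    (hc₁ : c₁ = lam * a₁) (hc₂ : c₂ = lam * a₂) (hc₃ : c₃ = lam * a₃)
    (hd₁ : c₁ + 2 * t * d₁ = (lam + 2 * t * mu) * (a₁ + 2 * t * b₁))
    (hd₂ : c₂ + 2 * t * d₂ = (lam + 2 * t * mu) * (a₂ + 2 * t * b₂))
    (hd₃ : c₃ + 2 * t * d₃ = (lam + 2 * t * mu) * (a₃ + 2 * t * b₃))
    (G : V × V → V × V → ℝ)
    (hG : ∀ X θ Y ω : V, G (X, θ) (Y, ω) =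
      c₁ * ⟪X, Y⟫ + d₁ * (⟪p, X⟫ * ⟪p, Y⟫) + c₂ * ⟪θ, ω⟫ +
        d₂ * (⟪p, θ⟫ * ⟪p, ω⟫) + c₃ * (⟪X, ω⟫ + ⟪θ, Y⟫) +
        d₃ * (⟪p, X⟫ * ⟪p, ω⟫ + ⟪p, θ⟫ * ⟪p, Y⟫)) :
    ∀ ξ : V × V, ξ ≠ 0 → 0 < G ξ ξ := by
  rintro ⟨X, θ⟩ hξ
  have hne : X ≠ 0 ∨ θ ≠ 0 := by
    by_contra hc
    push Not at hc
    exact hξ (by simp [hc.1, hc.2])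
  have k₁ : 0 < c₁ := by rw [hc₁]; positivity
  have k₂ : c₃ ^ 2 < c₁ * c₂ := by
    have : c₁ * c₂ = c₃ ^ 2 + lam ^ 2 := by
      rw [hc₁, hc₂, hc₃]; linear_combination lam ^ 2 * h1
    have : 0 < lam ^ 2 := by positivity
    linarith
  have k₃ : 0 < c₁ + 2 * t * d₁ := by rw [hd₁]; positivity
  have k₄ : (c₃ + 2 * t * d₃) ^ 2 < (c₁ + 2 * t * d₁) * (c₂ + 2 * t * d₂) := by
    have : (c₁ + 2 * t * d₁) * (c₂ + 2 * t * d₂) =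
        (c₃ + 2 * t * d₃) ^ 2 + (lam + 2 * t * mu) ^ 2 := by
      rw [hd₁, hd₂, hd₃]; linear_combination (lam + 2 * t * mu) ^ 2 * h2
    have : 0 < (lam + 2 * t * mu) ^ 2 := by positivity
    linarith
  rw [hG]
  by_cases hp : p = 0
  · subst hp
    have := aux_pos c₁ c₂ c₃ k₁ k₂ X θ hne
    simp only [inner_zero_left, real_inner_comm X θ] at this ⊢
    linarith
  have hpp : ⟪p, p⟫ = 2 * t := by rw [real_inner_self_eq_norm_sq, ht]; ring
  have htp : 0 < 2 * t := hpp ▸ real_inner_self_pos.2 hp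
  obtain ⟨x, hx⟩ : ∃ x : ℝ, ⟪p, X⟫ = x * (2 * t) := ⟨⟪p, X⟫ / (2 * t), (div_mul_cancel₀ _ htp.ne.symm).symm⟩
  obtain ⟨y, hy⟩ : ∃ y : ℝ, ⟪p, θ⟫ = y * (2 * t) := ⟨⟪p, θ⟫ / (2 * t), (div_mul_cancel₀ _ htp.ne.symm).symm⟩
  have hx' : ⟪X, p⟫ = x * (2 * t) := by rw [real_inner_comm, hx]
  have hy' : ⟪θ, p⟫ = y * (2 * t) := by rw [real_inner_comm, hy]
  have key : c₁ * ⟪X, X⟫ + d₁ * (⟪p, X⟫ * ⟪p, X⟫) + c₂ * ⟪θ, θ⟫ +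
        d₂ * (⟪p, θ⟫ * ⟪p, θ⟫) + c₃ * (⟪X, θ⟫ + ⟪θ, X⟫) +
        d₃ * (⟪p, X⟫ * ⟪p, θ⟫ + ⟪p, θ⟫ * ⟪p, X⟫) =
      (c₁ * ⟪X - x • p, X - x • p⟫ + c₂ * ⟪θ - y • p, θ - y • p⟫ +
        2 * c₃ * ⟪X - x • p, θ - y • p⟫) +
      ((c₁ + 2 * t * d₁) * ⟪x • p, x • p⟫ + (c₂ + 2 * t * d₂) * ⟪y • p, y • p⟫ +
        2 * (c₃ + 2 * t * d₃) * ⟪x • p, y • p⟫) := by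
    simp only [inner_sub_left, inner_sub_right, real_inner_smul_left, real_inner_smul_right,
      real_inner_comm X θ, hx, hy, hx', hy', hpp]
    ring
  rw [key]
  by_cases hr : X - x • p ≠ 0 ∨ θ - y • p ≠ 0
  · exact add_pos_of_pos_of_nonneg (aux_pos _ _ _ k₁ k₂ _ _ hr) (aux_nonneg _ _ _ k₃ k₄ _ _)
  · push Not at hr
    refine add_pos_of_nonneg_of_pos (aux_nonneg _ _ _ k₁ k₂ _ _) (aux_pos _ _ _ k₃ k₄ _ _ ?_)
    rwa [← sub_eq_zero.1 hr.1, ← sub_eq_zero.1 hr.2]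
end

section
/- Let V be a finite-dimensional real inner product space, let p ∈ V, set t = ‖p‖²/2, and let P : V → V denote the endomorphism P(X) = ⟨p,X⟩p. Let c₁, c₂, c₃, d₁, d₂, d₃ be real numbers such that α := c₁c₂ − c₃² ≠ 0, β := (c₁ + 2td₁)(c₂ + 2td₂) − (c₃ + 2td₃)² ≠ 0, and c₂ + 2td₂ ≠ 0. Define G₁ = c₁·id + d₁P, G₂ = c₂·id + d₂P, G₃ = c₃·id + d₃P, and define e₁ = c₂/α, e₂ = c₁/α, e₃ = −c₃/α, f₁ = −(c₂d₁e₁ − c₃d₃e₁ − c₃d₂e₃ + c₂d₃e₃ + 2d₁d₂e₁t − 2d₃²e₁t)/(c₁c₂ − c₃² + 2c₂d₁t + 2c₁d₂t − 4c₃d₃t + 4d₁d₂t² − 4d₃²t²), f₂ = (c₃ + 2d₃t)·[(d₃e₁ + d₂e₃)(c₁ + 2d₁t) − (d₁e₁ + d₃e₃)(c₃ + 2d₃t)] / ((c₂ + 2d₂t)·[(c₁ + 2d₁t)(c₂ + 2d₂t) − (c₃ + 2d₃t)²]) − (d₂e₂ + d₃e₃)/(c₂ + 2d₂t), f₃ =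 −[(d₃e₁ + d₂e₃)(c₁ + 2d₁t) − (d₁e₁ + d₃e₃)(c₃ + 2d₃t)] / [(c₁ + 2d₁t)(c₂ + 2d₂t) − (c₃ + 2d₃t)²], and set H₁ = e₁·id + f₁P, H₂ = e₂·id + f₂P, H₃ = e₃·id + f₃P. Then G₁H₁ + G₃H₃ = id, G₁H₃ + G₃H₂ = 0, G₃H₁ + G₂H₃ = 0, and G₃H₃ + G₂H₂ = id; that is, the block operator with blocks (H₁, H₃; H₃, H₂) is the inverse of the block operator with blocks (G₁, G₃; G₃, G₂) on V × V. -/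
open scoped RealInnerProductSpace

/-- Fibrewise form of formulas (3.1) and (3.2): the block operator
`(H₁, H₃; H₃, H₂)` is the inverse of the block operator `(G₁, G₃; G₃, G₂)`. -/
theorem blocks_inverse_of_metric
    {V : Type*} [NormedAddCommGroup V] [InnerProductSpace ℝ V]
    [FiniteDimensional ℝ V]
    (p : V) (t : ℝ) (ht : t = ‖p‖ ^ 2 / 2)
    (P : V → V) (hP : ∀ x, P x = ⟪p, x⟫ • p)
    (c₁ c₂ c₃ d₁ d₂ d₃ : ℝ)
    (hα : c₁ * c₂ - c₃ ^ 2 ≠ 0)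
    (hβ : (c₁ + 2 * t * d₁) * (c₂ + 2 * t * d₂) - (c₃ + 2 * t * d₃) ^ 2 ≠ 0)
    (hc₂t : c₂ + 2 * t * d₂ ≠ 0)
    (G₁ G₂ G₃ : V → V)
    (hG₁ : ∀ x, G₁ x = c₁ • x + d₁ • P x)
    (hG₂ : ∀ x, G₂ x = c₂ • x + d₂ • P x)
    (hG₃ : ∀ x, G₃ x = c₃ • x + d₃ • P x)
    (e₁ e₂ e₃ f₁ f₂ f₃ : ℝ)
    (he₁ : e₁ = c₂ / (c₁ * c₂ - c₃ ^ 2))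
    (he₂ : e₂ = c₁ / (c₁ * c₂ - c₃ ^ 2))
    (he₃ : e₃ = -c₃ / (c₁ * c₂ - c₃ ^ 2))
    (hf₁ : f₁ = -((c₂ * d₁ * e₁ - c₃ * d₃ * e₁ - c₃ * d₂ * e₃ + c₂ * d₃ * e₃ +
        2 * d₁ * d₂ * e₁ * t - 2 * d₃ ^ 2 * e₁ * t) /
      (c₁ * c₂ - c₃ ^ 2 + 2 * c₂ * d₁ * t + 2 * c₁ * d₂ * t - 4 * c₃ * d₃ * t +
        4 * d₁ * d₂ * t ^ 2 - 4 * d₃ ^ 2 * t ^ 2)))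
    (hf₂ : f₂ = (c₃ + 2 * d₃ * t) *
        ((d₃ * e₁ + d₂ * e₃) * (c₁ + 2 * d₁ * t) -
          (d₁ * e₁ + d₃ * e₃) * (c₃ + 2 * d₃ * t)) /
        ((c₂ + 2 * d₂ * t) *
          ((c₁ + 2 * d₁ * t) * (c₂ + 2 * d₂ * t) - (c₃ + 2 * d₃ * t) ^ 2)) -
      (d₂ * e₂ + d₃ * e₃) / (c₂ + 2 * d₂ * t))
    (hf₃ : f₃ = -(((d₃ * e₁ + d₂ * e₃) * (c₁ + 2 * d₁ * t) -
          (d₁ * e₁ + d₃ * e₃) * (c₃ + 2 * d₃ * t)) /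
        ((c₁ + 2 * d₁ * t) * (c₂ + 2 * d₂ * t) - (c₃ + 2 * d₃ * t) ^ 2)))
    (H₁ H₂ H₃ : V → V)
    (hH₁ : ∀ x, H₁ x = e₁ • x + f₁ • P x)
    (hH₂ : ∀ x, H₂ x = e₂ • x + f₂ • P x)
    (hH₃ : ∀ x, H₃ x = e₃ • x + f₃ • P x) :
    (∀ x, G₁ (H₁ x) + G₃ (H₃ x) = x) ∧
    (∀ x, G₁ (H₃ x) + G₃ (H₂ x) = 0) ∧
    (∀ x, G₃ (H₁ x) + G₂ (H₃ x) = 0) ∧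
    (∀ x, G₃ (H₃ x) + G₂ (H₂ x) = x) := by
  have hPP : ∀ a b : ℝ, ∀ x, P (a • x + b • P x) = (a + 2 * t * b) • P x := by
    intro a b x
    have h2 : ⟪p, p⟫ = 2 * t := by rw [real_inner_self_eq_norm_sq, ht]; ring
    simp only [hP, inner_add_right, inner_smul_right, h2, smul_smul]
    congr 1
    ring
  have hβ1 : (c₁ + 2 * d₁ * t) * (c₂ + 2 * d₂ * t) - (c₃ + 2 * d₃ * t) ^ 2 ≠ 0 := by
    intro h; apply hβ; rw [← h]; ring
  have hβ2 : c₁ * c₂ - c₃ ^ 2 + 2 * c₂ * d₁ * t + 2 * c₁ * d₂ * t - 4 * c₃ * d₃ * t +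
        4 * d₁ * d₂ * t ^ 2 - 4 * d₃ ^ 2 * t ^ 2 =
      (c₁ + 2 * d₁ * t) * (c₂ + 2 * d₂ * t) - (c₃ + 2 * d₃ * t) ^ 2 := by ring
  have hC : c₂ + 2 * d₂ * t ≠ 0 := by
    intro h; apply hc₂t; rw [← h]; ring
  rw [hβ2] at hf₁
  have a1 : c₁ * e₁ + c₃ * e₃ = 1 := by rw [he₁, he₃]; field_simp; ring
  have a2 : c₁ * e₃ + c₃ * e₂ = 0 := by rw [he₂, he₃]; field_simp; ring
  have a3 : c₃ * e₁ + c₂ * e₃ = 0 := by rw [he₁, he₃]; field_simp; ring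
  have a4 : c₃ * e₃ + c₂ * e₂ = 1 := by rw [he₂, he₃]; field_simp; ring
  have k3 : f₃ * ((c₁ + 2 * d₁ * t) * (c₂ + 2 * d₂ * t) - (c₃ + 2 * d₃ * t) ^ 2) =
      -((d₃ * e₁ + d₂ * e₃) * (c₁ + 2 * d₁ * t) -
          (d₁ * e₁ + d₃ * e₃) * (c₃ + 2 * d₃ * t)) := by
    rw [hf₃, neg_mul, div_mul_cancel₀ _ hβ1]
  have k1 : f₁ * ((c₁ + 2 * d₁ * t) * (c₂ + 2 * d₂ * t) - (c₃ + 2 * d₃ * t) ^ 2) =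
      -(c₂ * d₁ * e₁ - c₃ * d₃ * e₁ - c₃ * d₂ * e₃ + c₂ * d₃ * e₃ +
        2 * d₁ * d₂ * e₁ * t - 2 * d₃ ^ 2 * e₁ * t) := by
    rw [hf₁, neg_mul, div_mul_cancel₀ _ hβ1]
  have k2 : f₂ * (c₂ + 2 * d₂ * t) = -(c₃ + 2 * d₃ * t) * f₃ - (d₂ * e₂ + d₃ * e₃) := by
    rw [hf₂, hf₃]
    generalize (c₁ + 2 * d₁ * t) * (c₂ + 2 * d₂ * t) - (c₃ + 2 * d₃ * t) ^ 2 = B at *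
    generalize c₂ + 2 * d₂ * t = C at *
    field_simp
  have b1 : c₁ * f₁ + d₁ * (e₁ + 2 * t * f₁) + (c₃ * f₃ + d₃ * (e₃ + 2 * t * f₃)) = 0 := by
    apply mul_right_cancel₀ hβ1
    linear_combination (c₁ + 2 * d₁ * t) * k1 + (c₃ + 2 * d₃ * t) * k3
  have b3 : c₃ * f₁ + d₃ * (e₁ + 2 * t * f₁) + (c₂ * f₃ + d₂ * (e₃ + 2 * t * f₃)) = 0 := by
    apply mul_right_cancel₀ hβ1
    linear_combination (c₃ + 2 * d₃ * t) * k1 + (c₂ + 2 * d₂ * t) * k3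
  have b4 : c₃ * f₃ + d₃ * (e₃ + 2 * t * f₃) + (c₂ * f₂ + d₂ * (e₂ + 2 * t * f₂)) = 0 := by
    linear_combination k2
  have b2 : c₁ * f₃ + d₁ * (e₃ + 2 * t * f₃) + (c₃ * f₂ + d₃ * (e₂ + 2 * t * f₂)) = 0 := by
    apply mul_right_cancel₀ hC
    have : (d₁ * e₃ + d₃ * e₂) * (c₂ + 2 * d₂ * t) - (c₃ + 2 * d₃ * t) * (d₂ * e₂ + d₃ * e₃)
        - ((d₃ * e₁ + d₂ * e₃) * (c₁ + 2 * d₁ * t) -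
          (d₁ * e₁ + d₃ * e₃) * (c₃ + 2 * d₃ * t)) = 0 := by
      linear_combination d₁ * a3 - d₂ * a2 + d₃ * a4 - d₃ * a1
    linear_combination (c₃ + 2 * d₃ * t) * k2 + k3 + this
  have key : ∀ a b c d e f g h u : ℝ, a * e + c * g = u →
      a * f + b * (e + 2 * t * f) + (c * h + d * (g + 2 * t * h)) = 0 → ∀ x,
      a • (e • x + f • P x) + b • P (e • x + f • P x) +
        (c • (g • x + h • P x) + d • P (g • x + h • P x)) = u • x := by
    intro a b c d e f g h u h1 h2 x
    rw [hPP, hPP]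
    have : a • (e • x + f • P x) + b • (e + 2 * t * f) • P x +
        (c • (g • x + h • P x) + d • (g + 2 * t * h) • P x) = (a * e + c * g) • x +
        (a * f + b * (e + 2 * t * f) + (c * h + d * (g + 2 * t * h))) • P x := by module
    rw [this, h1, h2, zero_smul, add_zero]
  refine ⟨fun x => ?_, fun x => ?_, fun x => ?_, fun x => ?_⟩
  · rw [hG₁, hG₃, hH₁, hH₃, key _ _ _ _ _ _ _ _ _ a1 b1, one_smul]
  · rw [hG₁, hG₃, hH₂, hH₃, key _ _ _ _ _ _ _ _ _ a2 b2, zero_smul]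
  · rw [hG₂, hG₃, hH₁, hH₃, key _ _ _ _ _ _ _ _ _ a3 b3, zero_smul]
  · rw [hG₂, hG₃, hH₂, hH₃, key _ _ _ _ _ _ _ _ _ a4 b4, one_smul]
end
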